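/- For every sequence (π_k) of causal couplings in Π_c(μ, *) with E_{π_k}[c_N(X, Y)] > 0 for all k and E_{π_k}[c_N(X, Y)] → 0 as k → ∞, one has limsup_{k→∞} E_{π_k}[f(Y) − f(X)] / E_{π_k}[c_N(X, Y)]^{1/p} ≤ ‖ᵒ𝔻f‖_{L^q(μ)} = ( Σ_{n=1}^N E_μ[ |E_μ[𝔻_n f(X) | F_n]|_*^q ] )^{1/q}. -/

import Mathlib

open MeasureTheory Filter Set
open scoped ENNReal

noncomputable section

/-- Discrete path space `X = (ℝ^d)^N`. -/
abbrev PathD (N d : ℕ) : Type := Fin N → Fin d → ℝ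

/-- The `ℓ_e` norm on `ℝ^d`. -/
def lpnorm {d : ℕ} (e : ℝ) (v : Fin d → ℝ) : ℝ := (∑ i, |v i| ^ e) ^ (1 / e)

/-- Coordinate `x_n` of a path, with the convention `x_0 = 0` (and `x_n = 0` for `n > N`). -/
def coord {N d : ℕ} (x : PathD N d) (n : ℕ) : Fin d → ℝ :=
  if h : 1 ≤ n ∧ n ≤ N then x ⟨n - 1, by omega⟩ else 0

/-- The cost `c_N(x,y) = Σ_{n=1}^N |Δx_n − Δy_n|^p` (with `|·|` the `ℓ_p` norm). -/
def cN {N d : ℕ} (p : ℝ) (x y : PathD N d) : ℝ :=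
  ∑ n ∈ Finset.Icc 1 N,
    lpnorm p ((coord x n - coord x (n - 1)) - (coord y n - coord y (n - 1))) ^ p

/-- The σ-algebra `F_n = σ(x_1, …, x_n)` on the discrete path space. -/
def Fn (N d n : ℕ) : MeasurableSpace (PathD N d) :=
  MeasurableSpace.comap (fun x (i : Fin N) => if (i : ℕ) + 1 ≤ n then x i else 0) inferInstance

/-- Conditional independence of `m₁` and `m₂` given `m'` under `π`, expressed through
conditional expectations of indicators. -/
def CondIndepOn {Ω : Type*} [MeasurableSpace Ω] (π : Measure Ω)
    (m' m₁ m₂ : MeasurableSpace Ω) : Prop :=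
  ∀ A B : Set Ω, MeasurableSet[m₁] A → MeasurableSet[m₂] B →
    (π[(A ∩ B).indicator (fun _ => (1 : ℝ)) | m']) =ᵐ[π]
      (π[A.indicator (fun _ => (1 : ℝ)) | m']) * (π[B.indicator (fun _ => (1 : ℝ)) | m'])

/-- `π` is a coupling with first marginal `μ` which is causal to its second marginal:
for every `n`, `σ(Y_1,…,Y_n)` is conditionally independent of `σ(X_1,…,X_N)` given `F_n`. -/
def IsCausalStar {N d : ℕ} (μ : Measure (PathD N d))
    (π : Measure (PathD N d × PathD N d)) : Prop :=
  π.map Prod.fst = μ ∧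
  ∀ n : ℕ, CondIndepOn π ((Fn N d n).comap Prod.fst)
    ((Fn N d n).comap Prod.snd) ((Fn N d N).comap Prod.fst)

/-- `π` is a causal coupling of `(μ, ν)`. -/
def IsCausalCoupling {N d : ℕ} (μ ν : Measure (PathD N d))
    (π : Measure (PathD N d × PathD N d)) : Prop :=
  π.map Prod.snd = ν ∧ IsCausalStar μ π

/-- `π` is a bicausal coupling of `(μ, ν)`: both `π` and its swap are causal. -/
def IsBicausalCoupling {N d : ℕ} (μ ν : Measure (PathD N d))
    (π : Measure (PathD N d × PathD N d)) : Prop :=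
  IsCausalCoupling μ ν π ∧
  (∀ n : ℕ, CondIndepOn π ((Fn N d n).comap Prod.snd)
    ((Fn N d n).comap Prod.fst) ((Fn N d N).comap Prod.snd))

/-- `μ` is a martingale measure on the discrete path space: every coordinate is integrable
and `E_μ[X_n | F_{n−1}] = X_{n−1}` a.s. (with `X_0 = 0`). -/
def IsMartingaleMeasure {N d : ℕ} (μ : Measure (PathD N d)) : Prop :=
  ∀ n : ℕ, 1 ≤ n → n ≤ N →
    Integrable (fun x => coord x n) μ ∧
    (μ[(fun x => coord x n) | Fn N d (n - 1)]) =ᵐ[μ] (fun x => coord x (n - 1))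


/-- The discrete pathwise Malliavin derivative `𝔻_n f = Σ_{k=n}^N ∂_k f`, where `∂_k f` is the
`ℝ^d`-valued partial gradient of `f` in the `k`-th coordinate block (`k = 1, …, N`). -/
def Dn {N d : ℕ} (f : PathD N d → ℝ) (n : ℕ) (x : PathD N d) : Fin d → ℝ :=
  fun j => ∑ k : Fin N, if n ≤ (k : ℕ) + 1 then
    fderiv ℝ f x (Pi.single k (Pi.single j 1)) else 0

/-- Standing assumptions on the penalty function `L : [0,∞) → [0,∞]`:
continuous, non-decreasing, `L(0) = 0` and `liminf_{u→∞} L(u)/u^p = +∞`. -/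
structure PenaltyAssumptions (p : ℝ) (L : ℝ → ℝ≥0∞) : Prop where
  cont : ContinuousOn L (Set.Ici 0)
  mono : MonotoneOn L (Set.Ici 0)
  zero : L 0 = 0
  growth : Tendsto (fun u : ℝ => L u / ENNReal.ofReal (u ^ p)) atTop (nhds ⊤)

/-- The convex conjugate `L*(v) = sup_{u ≥ 0} { u v − L(u) }`, valued in the extended reals. -/
def Lconj (L : ℝ → ℝ≥0∞) (v : ℝ) : EReal :=
  ⨆ u : {u : ℝ // 0 ≤ u}, ((u.1 * v : ℝ) : EReal) - ((L u.1 : ℝ≥0∞) : EReal)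

/-- The expected transport cost `E_π[c_N(X,Y)]` of a coupling. -/
def costD {N d : ℕ} (p : ℝ) (π : Measure (PathD N d × PathD N d)) : ℝ :=
  ∫ z, cN p z.1 z.2 ∂π

/-- The penalised causal DRO value
`V(δ) = sup_{π ∈ Π_c(μ,*), E_π[c_N] < ∞} { E_π[f(Y)] − δ L(E_π[c_N(X,Y)]^{1/p}/δ) }`,
valued in the extended reals. -/
def VD {N d : ℕ} (p : ℝ) (L : ℝ → ℝ≥0∞) (μ : Measure (PathD N d))
    (f : PathD N d → ℝ) (δ : ℝ) : EReal :=
  ⨆ π : {π : Measure (PathD N d × PathD N d) //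
      IsProbabilityMeasure π ∧ IsCausalStar μ π ∧
      Integrable (fun z => cN p z.1 z.2) π},
    ((∫ z, f z.2 ∂π.1 : ℝ) : EReal) -
      ((ENNReal.ofReal δ * L ((costD p π.1) ^ (1 / p) / δ) : ℝ≥0∞) : EReal)

/-- The `L^q(μ)`-norm `(Σ_{n=1}^N E_μ[|E_μ[𝔻_n f(X)|F_n]|_*^q])^{1/q}` of the optional
projection of the discrete pathwise Malliavin derivative. -/
def optionalNorm {N d : ℕ} (q : ℝ) (μ : Measure (PathD N d)) (f : PathD N d → ℝ) : ℝ :=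
  (∑ n ∈ Finset.Icc 1 N, ∫ x, lpnorm q ((μ[Dn f n | Fn N d n]) x) ^ q ∂μ) ^ (1 / q)

/-- The map `v(e) = (e_1|e_1|^{q−2}, …, e_d|e_d|^{q−2})` on `ℝ^d`. -/
def vmap {d : ℕ} (q : ℝ) (e : Fin d → ℝ) : Fin d → ℝ :=
  fun i => e i * |e i| ^ (q - 2)

/-- The inverse `Δ^{-1}` of the increment map: `(Δ^{-1} y)_n = Σ_{k=1}^n y_k`. -/
def DeltaInv {N d : ℕ} (y : PathD N d) : PathD N d :=
  fun i => ∑ k : Fin N, if (k : ℕ) ≤ (i : ℕ) then y k else 0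

/-- A process `h = (h_n)_{n=1}^N` is predictable if `h_n` is `F_{n−1}`-measurable. -/
def IsPredictable {N d : ℕ} (h : ℕ → PathD N d → Fin d → ℝ) : Prop :=
  ∀ n : ℕ, 1 ≤ n → n ≤ N → Measurable[Fn N d (n - 1)] (h n)

end

open MeasureTheory Filter

/-- If `m₁` and `m₂` are conditionally independent given `m' ≤ m₂`, then conditioning the
indicator of a set of `m₁` on `m₂` is the same as conditioning it on `m'`. -/
theorem CondIndepOn.condExp_indicator_eq {Ω : Type*} {m' m₁ m₂ : MeasurableSpace Ω}
    [m₀ : MeasurableSpace Ω] {π : Measure Ω} [IsProbabilityMeasure π] (h' : m' ≤ m₂) (h₁ : m₁ ≤ m₀)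
    (h₂ : m₂ ≤ m₀) (h : CondIndepOn π m' m₁ m₂) {A : Set Ω} (hA : MeasurableSet[m₁] A) :
    π[A.indicator (fun _ => (1 : ℝ)) | m'] =ᵐ[π] π[A.indicator (fun _ => (1 : ℝ)) | m₂] := by
  have hm' : m' ≤ m₀ := h'.trans h₂
  have hAi : Integrable (A.indicator (fun _ => (1 : ℝ))) π :=
    (integrable_const 1).indicator (h₁ A hA)
  refine ae_eq_condExp_of_forall_setIntegral_eq h₂ hAi
    (fun s _ _ => integrable_condExp.integrableOn) (fun E hE _ => ?_)
    (stronglyMeasurable_condExp.mono h').aestronglyMeasurable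
  have hEi : Integrable (E.indicator (fun _ => (1 : ℝ))) π :=
    (integrable_const 1).indicator (h₂ E hE)
  set P := π[A.indicator (fun _ => (1 : ℝ)) | m']
  have hPE : Integrable (P * E.indicator (fun _ => (1 : ℝ))) π := by
    have : P * E.indicator (fun _ => (1 : ℝ)) = E.indicator P := by
      ext x; by_cases hx : x ∈ E <;> simp [hx]
    rw [this]
    exact integrable_condExp.indicator (h₂ E hE)
  have hpull : π[P * E.indicator (fun _ => (1 : ℝ)) | m'] =ᵐ[π]
      P * π[E.indicator (fun _ => (1 : ℝ)) | m'] :=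
    condExp_mul_of_stronglyMeasurable_left stronglyMeasurable_condExp hPE hEi
  calc ∫ x in E, P x ∂π = ∫ x, (P * E.indicator (fun _ => (1 : ℝ))) x ∂π := by
        rw [← integral_indicator (h₂ E hE)]
        congr 1; ext x; by_cases hx : x ∈ E <;> simp [hx]
    _ = ∫ x, (π[P * E.indicator (fun _ => (1 : ℝ)) | m']) x ∂π := (integral_condExp hm').symm
    _ = ∫ x, (π[(A ∩ E).indicator (fun _ => (1 : ℝ)) | m']) x ∂π :=
        integral_congr_ae (hpull.trans (h A E hA hE).symm)
    _ = ∫ x, (A ∩ E).indicator (fun _ => (1 : ℝ)) x ∂π := integral_condExp hm'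
    _ = ∫ x in E, A.indicator (fun _ => (1 : ℝ)) x ∂π := by
        rw [← integral_indicator (h₂ E hE)]
        congr 1; ext x; by_cases hx : x ∈ E <;> by_cases hx' : x ∈ A <;> simp [hx, hx']

/-- If `m₁` and `m₂` are conditionally independent given `m' ≤ m₂`, then the conditional
expectation of an `m₂`-measurable function given `m' ⊔ m₁` is the one given `m'`. -/
theorem CondIndepOn.condExp_sup_eq {Ω : Type*} {m' m₁ m₂ : MeasurableSpace Ω}
    [m₀ : MeasurableSpace Ω] {π : Measure Ω} [IsProbabilityMeasure π] (h' : m' ≤ m₂) (h₁ : m₁ ≤ m₀)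
    (h₂ : m₂ ≤ m₀) (h : CondIndepOn π m' m₁ m₂) {g : Ω → ℝ} (hg : StronglyMeasurable[m₂] g)
    (hgi : Integrable g π) :
    π[g | m'] =ᵐ[π] π[g | m' ⊔ m₁] := by
  have hm' : m' ≤ m₀ := h'.trans h₂
  have hsup : m' ⊔ m₁ ≤ m₀ := sup_le hm' h₁
  set G := π[g | m']
  have hGi : Integrable G π := integrable_condExp
  have hGm : StronglyMeasurable[m' ⊔ m₁] G := stronglyMeasurable_condExp.mono le_sup_left
  have key : ∀ B A : Set Ω, MeasurableSet[m'] B → MeasurableSet[m₁] A →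
      ∫ x in B ∩ A, G x ∂π = ∫ x in B ∩ A, g x ∂π := by
    intro B A hB hA
    set a : Ω → ℝ := A.indicator (fun _ => (1 : ℝ)) with ha
    have hai : Integrable a π := (integrable_const 1).indicator (h₁ A hA)
    have mul_a : ∀ u : Ω → ℝ, B.indicator u * a = (B ∩ A).indicator u := by
      intro u
      ext x; by_cases hx : x ∈ B <;> by_cases hx' : x ∈ A <;> simp [ha, hx, hx']
    have hmeas : MeasurableSet (B ∩ A) := (hm' B hB).inter (h₁ A hA)
    have pull : ∀ (m : MeasurableSpace Ω) (u : Ω → ℝ), m ≤ m₀ → m' ≤ m →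
        StronglyMeasurable[m] u → Integrable u π →
        ∫ x in B ∩ A, u x ∂π = ∫ x, (B.indicator u * π[a | m]) x ∂π := by
      intro m u hm hmm hu hui
      have hint : Integrable (B.indicator u * a) π := by
        rw [mul_a]; exact hui.indicator hmeas
      rw [← integral_indicator hmeas, ← mul_a, ← integral_condExp hm]
      exact integral_congr_ae (condExp_mul_of_stronglyMeasurable_left
        (hu.indicator (hmm B hB)) hint hai)
    have hae := h.condExp_indicator_eq h' h₁ h₂ hA
    have habd : ∀ᵐ x ∂π, ‖(π[a | m']) x‖ ≤ 1 := by
      have := ae_bdd_abs_condExp_of_ae_bdd_abs (m := m') (μ := π) (R := 1) (f := a)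
        (Eventually.of_forall fun x => by by_cases hx : x ∈ A <;> simp [ha, hx])
      simpa using this
    have hint : Integrable (π[a | m'] * B.indicator g) π :=
      (hgi.indicator (hm' B hB)).bdd_mul
        (stronglyMeasurable_condExp.mono hm').aestronglyMeasurable habd
    rw [pull m' G hm' le_rfl stronglyMeasurable_condExp hGi, pull m₂ g h₂ h' hg hgi]
    calc ∫ x, (B.indicator G * π[a | m']) x ∂π
        = ∫ x, (π[π[a | m'] * B.indicator g | m']) x ∂π := by
          refine integral_congr_ae ?_
          filter_upwards [condExp_mul_of_stronglyMeasurable_left (m := m')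
            stronglyMeasurable_condExp hint (hgi.indicator (hm' B hB)),
            condExp_indicator (m := m') hgi hB] with x hx hx'
          rw [hx, Pi.mul_apply, Pi.mul_apply, hx', mul_comm]
      _ = ∫ x, (π[a | m'] * B.indicator g) x ∂π := integral_condExp hm'
      _ = ∫ x, (B.indicator g * π[a | m₂]) x ∂π := by
          refine integral_congr_ae ?_
          filter_upwards [hae] with x hx
          rw [Pi.mul_apply, Pi.mul_apply, ← hx, mul_comm]
  refine ae_eq_condExp_of_forall_setIntegral_eq hsup hgi
    (fun s _ _ => integrable_condExp.integrableOn) (fun S hS _ => ?_)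
    hGm.aestronglyMeasurable
  have hcomap : m' ⊔ m₁ = (m'.prod m₁).comap (fun ω => (ω, ω)) := by
    rw [MeasurableSpace.prod, MeasurableSpace.comap_sup, MeasurableSpace.comap_comp,
      MeasurableSpace.comap_comp]
    exact (congrArg₂ (· ⊔ ·) MeasurableSpace.comap_id MeasurableSpace.comap_id).symm
  have hdiag : ∀ T : Set (Ω × Ω), MeasurableSet[m'.prod m₁] T →
      MeasurableSet ((fun ω : Ω => (ω, ω)) ⁻¹' T) := fun T hT =>
    hsup _ (by rw [hcomap]; exact ⟨T, hT, rfl⟩)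
  rw [hcomap] at hS
  obtain ⟨T, hT, rfl⟩ := hS
  refine MeasurableSpace.induction_on_inter (m := m'.prod m₁)
    (C := fun T _ => ∫ x in (fun ω : Ω => (ω, ω)) ⁻¹' T, G x ∂π =
      ∫ x in (fun ω : Ω => (ω, ω)) ⁻¹' T, g x ∂π)
    (@generateFrom_prod _ _ m' m₁).symm (@isPiSystem_prod _ _ m' m₁) ?_ ?_ ?_ ?_ T hT
  · simp
  · rintro _ ⟨B, hB, A, hA, rfl⟩
    exact key B A hB hA
  · intro T hT ih
    have e1 := integral_add_compl (hdiag T hT) hGi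
    have e2 := integral_add_compl (hdiag T hT) hgi
    have e3 : ∫ x, G x ∂π = ∫ x, g x ∂π := integral_condExp hm'
    rw [Set.preimage_compl]
    linarith
  · intro F hF hFm ih
    rw [Set.preimage_iUnion, integral_iUnion (fun i => hdiag _ (hFm i))
      (fun i j hij => (hF hij).preimage _) hGi.integrableOn,
      integral_iUnion (fun i => hdiag _ (hFm i))
      (fun i j hij => (hF hij).preimage _) hgi.integrableOn]
    simp_rw [ih]

/-- Conditional expectations commute with pulling back along a measure preserving map. -/
theorem condExp_comap_eq_comp {Ω X : Type*} {m : MeasurableSpace X}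
    [m₀ : MeasurableSpace Ω] [mX : MeasurableSpace X]
    {π : Measure Ω} [IsProbabilityMeasure π] {φ : Ω → X} (hφ : Measurable φ)
    (hm : m ≤ mX) {g : X → ℝ} (hg : Integrable g (π.map φ)) :
    (fun ω => ((π.map φ)[g | m]) (φ ω)) =ᵐ[π] π[fun ω => g (φ ω) | m.comap φ] := by
  have : IsProbabilityMeasure (π.map φ) := Measure.isProbabilityMeasure_map hφ.aemeasurable
  have hmc : m.comap φ ≤ m₀ := (MeasurableSpace.comap_mono hm).trans hφ.comap_le
  have hsm : StronglyMeasurable[m.comap φ] (fun ω => ((π.map φ)[g | m]) (φ ω)) :=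
    stronglyMeasurable_condExp.comp_measurable (comap_measurable φ)
  refine ae_eq_condExp_of_forall_setIntegral_eq hmc (hg.comp_measurable hφ)
    (fun s _ _ => (integrable_condExp.comp_measurable hφ).integrableOn) ?_
    hsm.aestronglyMeasurable
  rintro _ ⟨T, hT, rfl⟩ -
  rw [← setIntegral_map (hm T hT) integrable_condExp.aestronglyMeasurable hφ.aemeasurable,
    ← setIntegral_map (hm T hT) hg.aestronglyMeasurable hφ.aemeasurable,
    setIntegral_condExp hm hg hT]

/-- The `n`-th increment of a path. -/
def incr {N d : ℕ} (x : PathD N d) (n : ℕ) : Fin d → ℝ := coord x n - coord x (n - 1)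

theorem lpnorm_nonneg {d : ℕ} (e : ℝ) (v : Fin d → ℝ) : 0 ≤ lpnorm e v :=
  Real.rpow_nonneg (Finset.sum_nonneg fun _ _ => Real.rpow_nonneg (abs_nonneg _) _) _

theorem lpnorm_rpow {d : ℕ} {e : ℝ} (he : 0 < e) (v : Fin d → ℝ) :
    lpnorm e v ^ e = ∑ i, |v i| ^ e := by
  rw [lpnorm, ← Real.rpow_mul (Finset.sum_nonneg fun _ _ => Real.rpow_nonneg (abs_nonneg _) _),
    one_div_mul_cancel he.ne', Real.rpow_one]

theorem abs_apply_le_lpnorm {d : ℕ} {e : ℝ} (he : 0 < e) (v : Fin d → ℝ) (i : Fin d) :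
    |v i| ≤ lpnorm e v := by
  rw [← Real.rpow_le_rpow_iff (abs_nonneg _) (lpnorm_nonneg _ _) he, lpnorm_rpow he]
  exact Finset.single_le_sum (f := fun i => |v i| ^ e)
    (fun _ _ => Real.rpow_nonneg (abs_nonneg _) _) (Finset.mem_univ i)

theorem coord_sub {N d : ℕ} (x y : PathD N d) (n : ℕ) :
    coord (x - y) n = coord x n - coord y n := by
  unfold coord; split_ifs <;> simp

theorem abs_coord_apply_le {N d : ℕ} (x : PathD N d) (n : ℕ) (j : Fin d) : |coord x n j| ≤ ‖x‖ := by
  unfold coord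
  split_ifs
  · exact (norm_le_pi_norm _ j).trans (norm_le_pi_norm x _)
  · simp

theorem abs_incr_apply_le {N d : ℕ} (x : PathD N d) (n : ℕ) (j : Fin d) :
    |incr x n j| ≤ 2 * ‖x‖ := by
  have h1 := abs_coord_apply_le x n j
  have h2 := abs_coord_apply_le x (n - 1) j
  have h3 := abs_sub (coord x n j) (coord x (n - 1) j)
  simp only [incr, Pi.sub_apply]
  linarith

theorem cN_nonneg {N d : ℕ} (p : ℝ) (x y : PathD N d) : 0 ≤ cN p x y :=
  Finset.sum_nonneg fun _ _ => Real.rpow_nonneg (lpnorm_nonneg _ _) _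

theorem cN_eq_sum_incr {N d : ℕ} {p : ℝ} (hp : 0 < p) (x y : PathD N d) :
    cN p x y = ∑ n ∈ Finset.Icc 1 N, ∑ j, |incr (y - x) n j| ^ p := by
  refine Finset.sum_congr rfl fun n _ => ?_
  rw [lpnorm_rpow hp]
  refine Finset.sum_congr rfl fun j _ => ?_
  rw [← abs_neg]
  simp only [incr, coord_sub, Pi.sub_apply]
  congr 2; ring

theorem sum_incr_eq {N d : ℕ} (v : PathD N d) (k : Fin N) (j : Fin d) :
    ∑ n ∈ Finset.Icc 1 N, (if n ≤ (k : ℕ) + 1 then incr v n j else 0) = v k j := by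
  have tel : ∀ m : ℕ, ∑ n ∈ Finset.Icc 1 m, incr v n j = coord v m j := by
    intro m
    induction m with
    | zero => simp [coord]
    | succ m ih => rw [Finset.sum_Icc_succ_top (by omega), ih]; simp [incr]
  rw [← Finset.sum_filter]
  have : (Finset.Icc 1 N).filter (fun n => n ≤ (k : ℕ) + 1) = Finset.Icc 1 ((k : ℕ) + 1) := by
    ext n; have := k.2; simp only [Finset.mem_filter, Finset.mem_Icc]; omega
  rw [this, tel]
  have hk : (k : ℕ) + 1 ≤ N := k.2
  simp [coord, hk]

theorem norm_sub_rpow_le_cN {N d : ℕ} {p : ℝ} (hp : 0 < p) (x y : PathD N d) :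
    ‖y - x‖ ^ p ≤ (N : ℝ) ^ p * cN p x y := by
  have hc : 0 ≤ cN p x y := cN_nonneg p x y
  have hc' : 0 ≤ cN p x y ^ (1 / p) := Real.rpow_nonneg hc _
  have hb : ∀ n ∈ Finset.Icc 1 N, ∀ j, |incr (y - x) n j| ≤ cN p x y ^ (1 / p) := by
    intro n hn j
    rw [one_div, Real.le_rpow_inv_iff_of_pos (abs_nonneg _) hc hp, cN_eq_sum_incr hp]
    refine (Finset.single_le_sum (f := fun j => |incr (y - x) n j| ^ p)
      (fun _ _ => Real.rpow_nonneg (abs_nonneg _) _) (Finset.mem_univ j)).trans ?_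
    exact Finset.single_le_sum (f := fun n => ∑ j, |incr (y - x) n j| ^ p)
      (fun _ _ => Finset.sum_nonneg fun _ _ => Real.rpow_nonneg (abs_nonneg _) _) hn
  have hn : ‖y - x‖ ≤ N * cN p x y ^ (1 / p) := by
    refine (pi_norm_le_iff_of_nonneg (by positivity)).2 fun k =>
      (pi_norm_le_iff_of_nonneg (by positivity)).2 fun j => ?_
    rw [Real.norm_eq_abs, ← sum_incr_eq (y - x) k j]
    refine (Finset.abs_sum_le_sum_abs _ _).trans ?_
    refine (Finset.sum_le_card_nsmul _ _ (cN p x y ^ (1 / p)) fun n hn => ?_).trans (by simp)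
    split_ifs
    · exact hb n hn j
    · simpa using hc'
  calc ‖y - x‖ ^ p ≤ (N * cN p x y ^ (1 / p)) ^ p :=
        Real.rpow_le_rpow (norm_nonneg _) hn hp.le
    _ = (N : ℝ) ^ p * cN p x y := by
        rw [Real.mul_rpow (Nat.cast_nonneg _) hc', ← Real.rpow_mul hc, one_div_mul_cancel hp.ne',
          Real.rpow_one]

/-- Summation by parts: the differential of `f` in terms of its Malliavin derivative. -/
theorem fderiv_eq_sum_Dn_mul_incr {N d : ℕ} (f : PathD N d → ℝ) (x v : PathD N d) :
    fderiv ℝ f x v = ∑ n ∈ Finset.Icc 1 N, ∑ j, Dn f n x j * incr v n j := by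
  have hv : v = ∑ k, ∑ j, v k j • (Pi.single k (Pi.single j 1) : PathD N d) := by
    ext k j
    simp [Finset.sum_apply, Pi.single_apply, apply_ite, ite_apply]
  conv_lhs => rw [hv]
  simp only [map_sum, map_smul, smul_eq_mul, Dn, Finset.sum_mul]
  conv_rhs =>
    enter [2, n]
    rw [Finset.sum_comm]
  rw [Finset.sum_comm (s := Finset.Icc 1 N)]
  refine Finset.sum_congr rfl fun k _ => ?_
  rw [Finset.sum_comm (s := Finset.Icc 1 N)]
  refine Finset.sum_congr rfl fun j _ => ?_
  conv_lhs => rw [← sum_incr_eq v k j, Finset.sum_mul]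
  refine Finset.sum_congr rfl fun n _ => ?_
  split_ifs <;> ring

/-- A growth bound on the Malliavin derivative controls the whole differential. -/
theorem norm_fderiv_le_of_lpnorm_Dn_le {N d : ℕ} {q : ℝ} (hq : 0 < q) {f : PathD N d → ℝ}
    {x : PathD N d} {b : ℝ} (h : ∀ n, lpnorm q (Dn f n x) ≤ b) :
    ‖fderiv ℝ f x‖ ≤ N * d * 2 * b := by
  have hb : 0 ≤ b := (lpnorm_nonneg q _).trans (h 0)
  refine ContinuousLinearMap.opNorm_le_bound _ (by positivity) fun v => ?_
  rw [fderiv_eq_sum_Dn_mul_incr, Real.norm_eq_abs]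
  calc |∑ n ∈ Finset.Icc 1 N, ∑ j, Dn f n x j * incr v n j|
      ≤ ∑ n ∈ Finset.Icc 1 N, ∑ j, |Dn f n x j * incr v n j| :=
        (Finset.abs_sum_le_sum_abs _ _).trans
          (Finset.sum_le_sum fun _ _ => Finset.abs_sum_le_sum_abs _ _)
    _ ≤ ∑ n ∈ Finset.Icc 1 N, ∑ _j : Fin d, b * (2 * ‖v‖) := by
        gcongr with n _ j
        rw [abs_mul]
        exact mul_le_mul ((abs_apply_le_lpnorm hq _ j).trans (h n)) (abs_incr_apply_le v n j)
          (abs_nonneg _) hb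
    _ = N * d * 2 * b * ‖v‖ := by simp; ring

theorem continuous_Dn {N d : ℕ} {f : PathD N d → ℝ} (hf : ContDiff ℝ 1 f) (n : ℕ) :
    Continuous (Dn f n) := by
  have h : Continuous (fderiv ℝ f) := hf.continuous_fderiv one_ne_zero
  refine continuous_pi fun j => continuous_finsetSum _ fun k _ => ?_
  split_ifs
  · exact h.clm_apply continuous_const
  · exact continuous_const

theorem continuous_coord {N d : ℕ} (n : ℕ) : Continuous (fun x : PathD N d => coord x n) := by
  unfold coord; split_ifs <;> fun_prop

theorem Fn_le {N d : ℕ} (n : ℕ) : Fn N d n ≤ (inferInstance : MeasurableSpace (PathD N d)) := by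
  refine Measurable.comap_le (measurable_pi_lambda _ fun i => ?_)
  split_ifs <;> fun_prop

theorem Fn_self {N d : ℕ} : Fn N d N = (inferInstance : MeasurableSpace (PathD N d)) := by
  have : (fun (x : PathD N d) (i : Fin N) => if (i : ℕ) + 1 ≤ N then x i else 0) = id := by
    ext x i j; have : (i : ℕ) + 1 ≤ N := i.2; simp [this]
  rw [Fn, this, MeasurableSpace.comap_id]

theorem measurable_coord_Fn {N d : ℕ} {m n : ℕ} (h : m ≤ n) :
    Measurable[Fn N d n] (fun x : PathD N d => coord x m) := by
  by_cases hm : 1 ≤ m ∧ m ≤ N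
  · have e : (fun x : PathD N d => coord x m) = (fun y : PathD N d => y ⟨m - 1, by omega⟩) ∘
        (fun (x : PathD N d) (i : Fin N) => if (i : ℕ) + 1 ≤ n then x i else 0) := by
      ext x j
      have : m - 1 < n := by omega
      simp [coord, hm, this]
    rw [e]
    exact (measurable_pi_apply _).comp (comap_measurable _)
  · simp only [coord, hm, dite_false]
    exact measurable_const

theorem measurable_incr_sub {N d : ℕ} (n : ℕ) (j : Fin d) :
    Measurable[(Fn N d n).comap Prod.fst ⊔ (Fn N d n).comap Prod.snd]
      (fun z : PathD N d × PathD N d => incr (z.2 - z.1) n j) := by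
  have c1 : ∀ m ≤ n, Measurable[(Fn N d n).comap Prod.fst ⊔ (Fn N d n).comap Prod.snd]
      (fun z : PathD N d × PathD N d => coord z.1 m j) := fun m hm =>
    ((measurable_pi_apply j).comp ((measurable_coord_Fn hm).comp (comap_measurable _))).mono
      le_sup_left le_rfl
  have c2 : ∀ m ≤ n, Measurable[(Fn N d n).comap Prod.fst ⊔ (Fn N d n).comap Prod.snd]
      (fun z : PathD N d × PathD N d => coord z.2 m j) := fun m hm =>
    ((measurable_pi_apply j).comp ((measurable_coord_Fn hm).comp (comap_measurable _))).mono
      le_sup_right le_rfl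
  simp only [incr, coord_sub, Pi.sub_apply]
  exact ((c2 n le_rfl).sub (c1 n le_rfl)).sub ((c2 _ (Nat.sub_le _ _)).sub (c1 _ (Nat.sub_le _ _)))

/-- First order Taylor bound for a function whose differential has polynomial growth: away from
large `x`, the remainder is small compared to `‖y - x‖`, up to a term of order `s + 1`. -/
theorem exists_taylor_remainder_le {E : Type*} [NormedAddCommGroup E] [NormedSpace ℝ E]
    [ProperSpace E] {f : E → ℝ} (hf : ContDiff ℝ 1 f) {s K : ℝ} (hs : 0 < s)
    (hK : ∀ x, ‖fderiv ℝ f x‖ ≤ K * (1 + ‖x‖ ^ s)) :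
    ∃ K₁, 0 ≤ K₁ ∧ ∀ M ε : ℝ, 0 < ε → ∃ K₂, 0 ≤ K₂ ∧ ∀ x y,
      |f y - f x - fderiv ℝ f x (y - x)| ≤
        (ε + (if M < ‖x‖ then K₁ * (1 + ‖x‖ ^ s) else 0) + K₂ * ‖y - x‖ ^ s) * ‖y - x‖ := by
  have hK0 : 0 ≤ K := by simpa [hs.ne'] using (norm_nonneg _).trans (hK 0)
  have hc : Continuous (fderiv ℝ f) := hf.continuous_fderiv one_ne_zero
  set K₁ := K * (2 + 2 ^ s) with hK₁
  have hK₁0 : 0 ≤ K₁ := by positivity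
  have hsum : ∀ x z : E, ∀ r, ‖z - x‖ ≤ r →
      ‖fderiv ℝ f z - fderiv ℝ f x‖ ≤ K₁ * (1 + ‖x‖ ^ s) + K₁ * r ^ s := by
    intro x z r hr
    have hr0 : 0 ≤ r := (norm_nonneg _).trans hr
    have hz : ‖z‖ ^ s ≤ 2 ^ s * (‖x‖ ^ s + r ^ s) := by
      have h1 : ‖z‖ ≤ 2 * max ‖x‖ r := by
        have := norm_le_norm_add_norm_sub' z x
        have := le_max_left ‖x‖ r
        have := le_max_right ‖x‖ r
        linarith
      have h0 : 0 ≤ max ‖x‖ r := (norm_nonneg x).trans (le_max_left _ _)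
      have h2 : max ‖x‖ r ^ s ≤ ‖x‖ ^ s + r ^ s := by
        have := Real.rpow_nonneg (norm_nonneg x) s
        have := Real.rpow_nonneg hr0 s
        rcases max_choice ‖x‖ r with h | h <;> rw [h] <;> linarith
      calc ‖z‖ ^ s ≤ (2 * max ‖x‖ r) ^ s := Real.rpow_le_rpow (norm_nonneg _) h1 hs.le
        _ = 2 ^ s * max ‖x‖ r ^ s := Real.mul_rpow zero_le_two h0
        _ ≤ _ := by gcongr
    have hx0 := Real.rpow_nonneg (norm_nonneg x) s
    have hr0' := Real.rpow_nonneg hr0 s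
    have h20 : (0 : ℝ) ≤ 2 ^ s := by positivity
    calc ‖fderiv ℝ f z - fderiv ℝ f x‖ ≤ K * (1 + ‖z‖ ^ s) + K * (1 + ‖x‖ ^ s) :=
          (norm_sub_le _ _).trans (add_le_add (hK z) (hK x))
      _ ≤ K * (1 + 2 ^ s * (‖x‖ ^ s + r ^ s)) + K * (1 + ‖x‖ ^ s) := by gcongr
      _ ≤ K₁ * (1 + ‖x‖ ^ s) + K₁ * r ^ s := by
          rw [← sub_nonneg]
          have : K₁ * (1 + ‖x‖ ^ s) + K₁ * r ^ s -
            (K * (1 + 2 ^ s * (‖x‖ ^ s + r ^ s)) + K * (1 + ‖x‖ ^ s)) =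
            K * (2 ^ s + ‖x‖ ^ s + 2 * r ^ s) := by rw [hK₁]; ring
          rw [this]; positivity
  refine ⟨K₁, hK₁0, fun M ε hε => ?_⟩
  obtain ⟨δ, hδ, hunif⟩ := Metric.uniformContinuousOn_iff.1
    ((isCompact_closedBall (0 : E) (M + 1)).uniformContinuousOn_of_continuous hc.continuousOn) ε hε
  set r := min (δ / 2) 1 with hr
  have hr0 : 0 < r := by positivity
  have hrδ : r < δ := (min_le_left _ _).trans_lt (by linarith)
  have hr1 : r ≤ 1 := min_le_right _ _
  refine ⟨K₁ + K₁ * (1 + |M| ^ s) / r ^ s, by positivity, fun x y => ?_⟩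
  rw [← Real.norm_eq_abs]
  refine (convex_segment x y).norm_image_sub_le_of_norm_fderiv_le' (𝕜 := ℝ)
    (fun z _ => hf.differentiable one_ne_zero z) (fun z hz => ?_)
    (left_mem_segment ℝ x y) (right_mem_segment ℝ x y)
  have hzx : ‖z - x‖ ≤ ‖y - x‖ := norm_sub_le_of_mem_segment hz
  have hbig := hsum x z _ hzx
  have hys : 0 ≤ ‖y - x‖ ^ s := Real.rpow_nonneg (norm_nonneg _) s
  have hterm : 0 ≤ K₁ * (1 + |M| ^ s) / r ^ s * ‖y - x‖ ^ s := by positivity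
  rw [add_mul]
  split_ifs with hM
  · linarith
  · push Not at hM
    have hM0 : 0 ≤ M := (norm_nonneg x).trans hM
    by_cases hyr : ‖y - x‖ ≤ r
    · have hx : x ∈ Metric.closedBall (0 : E) (M + 1) := by
        rw [mem_closedBall_zero_iff]; linarith
      have hz' : z ∈ Metric.closedBall (0 : E) (M + 1) := by
        have := norm_le_norm_add_norm_sub' z x
        rw [mem_closedBall_zero_iff]; linarith
      have := hunif z hz' x hx (by rw [dist_eq_norm]; linarith)
      rw [dist_eq_norm] at this
      have : 0 ≤ K₁ * ‖y - x‖ ^ s := by positivity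
      linarith
    · push Not at hyr
      have h1 : 1 ≤ ‖y - x‖ ^ s / r ^ s := by
        rw [one_le_div (by positivity)]
        exact Real.rpow_le_rpow hr0.le hyr.le hs.le
      have h2 : K₁ * (1 + ‖x‖ ^ s) ≤ K₁ * (1 + |M| ^ s) / r ^ s * ‖y - x‖ ^ s := by
        calc K₁ * (1 + ‖x‖ ^ s) ≤ K₁ * (1 + |M| ^ s) * 1 := by
              rw [mul_one, abs_of_nonneg hM0]; gcongr
          _ ≤ K₁ * (1 + |M| ^ s) * (‖y - x‖ ^ s / r ^ s) := by gcongr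
          _ = _ := by ring
      linarith

theorem memLp_of_integrable_norm_rpow {Ω E : Type*} [MeasurableSpace Ω] [NormedAddCommGroup E]
    {π : Measure Ω} {p : ℝ} (hp : 0 < p) {u : Ω → E} (hu : AEStronglyMeasurable u π)
    (h : Integrable (fun ω => ‖u ω‖ ^ p) π) : MemLp u (ENNReal.ofReal p) π := by
  refine (integrable_norm_rpow_iff hu (by simpa using hp) ENNReal.ofReal_ne_top).1 ?_
  simpa [ENNReal.toReal_ofReal hp.le] using h

theorem MeasureTheory.MemLp.integrable_norm_rpow_ofReal {Ω E : Type*} [MeasurableSpace Ω]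
    [NormedAddCommGroup E] {π : Measure Ω} {p : ℝ} (hp : 0 < p) {u : Ω → E}
    (hu : MemLp u (ENNReal.ofReal p) π) : Integrable (fun ω => ‖u ω‖ ^ p) π := by
  simpa [ENNReal.toReal_ofReal hp.le] using
    hu.integrable_norm_rpow (by simpa using hp) ENNReal.ofReal_ne_top

theorem memLp_rpow_one_div {Ω : Type*} [MeasurableSpace Ω] {π : Measure Ω} {p : ℝ} (hp : 0 < p)
    {A : Ω → ℝ} (hA : Integrable A π) (hA0 : ∀ ω, 0 ≤ A ω) :
    MemLp (fun ω => A ω ^ (1 / p)) (ENNReal.ofReal p) π := by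
  refine memLp_of_integrable_norm_rpow hp
    (hA.aestronglyMeasurable.aemeasurable.pow_const _).aestronglyMeasurable ?_
  refine hA.congr (Eventually.of_forall fun ω => ?_)
  change A ω = ‖A ω ^ (1 / p)‖ ^ p
  rw [Real.norm_eq_abs, abs_of_nonneg (Real.rpow_nonneg (hA0 ω) _), ← Real.rpow_mul (hA0 ω),
    one_div_mul_cancel hp.ne', Real.rpow_one]

theorem measurable_sub_path {N d : ℕ} :
    Measurable (fun z : PathD N d × PathD N d => z.2 - z.1) :=
  (continuous_snd.sub continuous_fst).measurable

theorem measurable_incr {N d : ℕ} (n : ℕ) (j : Fin d) :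
    Measurable (fun z : PathD N d × PathD N d => incr (z.2 - z.1) n j) := by
  have h : Continuous (fun z : PathD N d × PathD N d => incr (z.2 - z.1) n j) :=
    (continuous_apply j).comp (((continuous_coord n).sub (continuous_coord (n - 1))).comp
      (continuous_snd.sub continuous_fst))
  exact h.measurable

theorem integrable_norm_sub_rpow {N d : ℕ} {p : ℝ} (hp : 0 < p)
    {π : Measure (PathD N d × PathD N d)} (hcost : Integrable (fun z => cN p z.1 z.2) π) :
    Integrable (fun z : PathD N d × PathD N d => ‖z.2 - z.1‖ ^ p) π := by
  refine (hcost.const_mul ((N : ℝ) ^ p)).mono'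
    (measurable_sub_path.norm.pow_const p).aestronglyMeasurable (Eventually.of_forall fun z => ?_)
  rw [Real.norm_eq_abs, abs_of_nonneg (Real.rpow_nonneg (norm_nonneg _) _)]
  exact norm_sub_rpow_le_cN hp z.1 z.2

theorem memLp_incr {N d : ℕ} {p : ℝ} (hp : 0 < p)
    {π : Measure (PathD N d × PathD N d)} (hcost : Integrable (fun z => cN p z.1 z.2) π)
    {n : ℕ} (hn : n ∈ Finset.Icc 1 N) (j : Fin d) :
    MemLp (fun z : PathD N d × PathD N d => incr (z.2 - z.1) n j) (ENNReal.ofReal p) π := by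
  refine memLp_of_integrable_norm_rpow hp (measurable_incr n j).aestronglyMeasurable ?_
  refine hcost.mono' ((measurable_incr n j).norm.pow_const p).aestronglyMeasurable
    (Eventually.of_forall fun z => ?_)
  rw [Real.norm_eq_abs, abs_of_nonneg (Real.rpow_nonneg (norm_nonneg _) _), cN_eq_sum_incr hp]
  refine (Finset.single_le_sum (f := fun j => |incr (z.2 - z.1) n j| ^ p)
    (fun _ _ => Real.rpow_nonneg (abs_nonneg _) _) (Finset.mem_univ j)).trans ?_
  exact Finset.single_le_sum (f := fun n => ∑ j, |incr (z.2 - z.1) n j| ^ p)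
    (fun _ _ => Finset.sum_nonneg fun _ _ => Real.rpow_nonneg (abs_nonneg _) _) hn

/-- Under a causal coupling, `g(X)` may be replaced by `E_μ[g(X) | F_n]` when integrated against
the `n`-th increment of `Y - X`. -/
theorem IsCausalStar.integral_mul_incr_eq {N d : ℕ} {p q : ℝ} (hpq : p.HolderConjugate q)
    {μ : Measure (PathD N d)} {π : Measure (PathD N d × PathD N d)} [IsProbabilityMeasure π]
    (hπ : IsCausalStar μ π) (hcost : Integrable (fun z => cN p z.1 z.2) π)
    {g : PathD N d → ℝ} (hgm : Measurable g) (hg : MemLp g (ENNReal.ofReal q) μ)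
    {n : ℕ} (hn : n ∈ Finset.Icc 1 N) (j : Fin d) :
    ∫ z, g z.1 * incr (z.2 - z.1) n j ∂π =
      ∫ z, (μ[g | Fn N d n]) z.1 * incr (z.2 - z.1) n j ∂π := by
  obtain ⟨rfl, hc⟩ := hπ
  have := hpq.ennrealOfReal
  have : IsProbabilityMeasure (π.map Prod.fst) :=
    Measure.isProbabilityMeasure_map measurable_fst.aemeasurable
  have hgi : Integrable g (π.map Prod.fst) := hg.integrable (by
    rw [← ENNReal.ofReal_one]; exact ENNReal.ofReal_le_ofReal hpq.symm.lt.le)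
  have hgz : Integrable (fun z : PathD N d × PathD N d => g z.1) π :=
    hgi.comp_measurable measurable_fst
  have hW := memLp_incr hpq.pos hcost hn j
  have hgzq : MemLp (fun z : PathD N d × PathD N d => g z.1) (ENNReal.ofReal q) π :=
    hg.comp_measurePreserving (measurable_fst.measurePreserving π)
  have hmul : Integrable (fun z : PathD N d × PathD N d => g z.1 * incr (z.2 - z.1) n j) π :=
    hgzq.integrable_mul hW
  have hle₁ : (Fn N d n).comap Prod.fst ≤
      (inferInstance : MeasurableSpace (PathD N d × PathD N d)) :=
    (MeasurableSpace.comap_mono (Fn_le n)).trans measurable_fst.comap_le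
  have hle₂ : (Fn N d n).comap Prod.snd ≤
      (inferInstance : MeasurableSpace (PathD N d × PathD N d)) :=
    (MeasurableSpace.comap_mono (Fn_le n)).trans measurable_snd.comap_le
  have hle₃ : (Fn N d N).comap Prod.fst ≤
      (inferInstance : MeasurableSpace (PathD N d × PathD N d)) :=
    (MeasurableSpace.comap_mono (Fn_le N)).trans measurable_fst.comap_le
  have h13 : (Fn N d n).comap (Prod.fst : PathD N d × PathD N d → _) ≤
      (Fn N d N).comap Prod.fst :=
    MeasurableSpace.comap_mono ((Fn_le n).trans Fn_self.ge)
  have hsm : StronglyMeasurable[(Fn N d N).comap Prod.fst]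
      (fun z : PathD N d × PathD N d => g z.1) := by
    rw [Fn_self]
    exact hgm.stronglyMeasurable.comp_measurable (comap_measurable _)
  have e1 := (condExp_comap_eq_comp measurable_fst (Fn_le n) hgi).trans
    ((hc n).condExp_sup_eq h13 hle₂ hle₃ hsm hgz)
  have e2 := condExp_mul_of_stronglyMeasurable_right (μ := π)
    (m := (Fn N d n).comap Prod.fst ⊔ (Fn N d n).comap Prod.snd)
    (f := fun z : PathD N d × PathD N d => g z.1)
    (measurable_incr_sub n j).stronglyMeasurable hmul hgz
  rw [← integral_condExp (sup_le hle₁ hle₂)]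
  refine integral_congr_ae ?_
  filter_upwards [e1, e2] with z h1 h2
  rw [h1]
  exact h2

/-- The first order term along a causal coupling is controlled by the optional projection of the
Malliavin derivative. -/
theorem IsCausalStar.integral_fderiv_le {N d : ℕ} {p q : ℝ} (hpq : p.HolderConjugate q)
    {μ : Measure (PathD N d)} [IsProbabilityMeasure μ] {π : Measure (PathD N d × PathD N d)}
    [IsProbabilityMeasure π] (hπ : IsCausalStar μ π)
    (hcost : Integrable (fun z => cN p z.1 z.2) π) {f : PathD N d → ℝ} (hf : ContDiff ℝ 1 f)
    (hD : ∀ n, MemLp (Dn f n) (ENNReal.ofReal q) μ) :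
    Integrable (fun z => fderiv ℝ f z.1 (z.2 - z.1)) π ∧
      ∫ z, fderiv ℝ f z.1 (z.2 - z.1) ∂π ≤ optionalNorm q μ f * costD p π ^ (1 / p) := by
  have hmp : MeasurePreserving Prod.fst π μ := ⟨measurable_fst, hπ.1⟩
  have := hpq.ennrealOfReal
  have hq1 : (1 : ℝ≥0∞) ≤ ENNReal.ofReal q := by
    rw [← ENNReal.ofReal_one]; exact ENNReal.ofReal_le_ofReal hpq.symm.lt.le
  set G : ℕ → PathD N d → Fin d → ℝ := fun n => μ[Dn f n | Fn N d n]
  have hDi : ∀ n, Integrable (Dn f n) μ := fun n => (hD n).integrable hq1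
  have hGq : ∀ n, MemLp (G n) (ENNReal.ofReal q) μ := fun n => (hD n).condExp hq1
  have apply_memLp : ∀ {u : PathD N d → Fin d → ℝ} (j : Fin d), MemLp u (ENNReal.ofReal q) μ →
      MemLp (fun x => u x j) (ENNReal.ofReal q) μ := fun j hu =>
    hu.continuousLinearMap_comp (ContinuousLinearMap.proj (R := ℝ) (φ := fun _ : Fin d => ℝ) j)
  have hGj : ∀ n j, (fun x => G n x j) =ᵐ[μ] μ[fun x => Dn f n x j | Fn N d n] := fun n j =>
    (ContinuousLinearMap.proj (R := ℝ) (φ := fun _ : Fin d => ℝ) j).comp_condExp_comm (hDi n)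
  have hDW : ∀ n ∈ Finset.Icc 1 N, ∀ j : Fin d, Integrable
      (fun z : PathD N d × PathD N d => Dn f n z.1 j * incr (z.2 - z.1) n j) π := fun n hn j =>
    ((apply_memLp j (hD n)).comp_measurePreserving hmp).integrable_mul
      (memLp_incr hpq.pos hcost hn j)
  have hGW : ∀ n ∈ Finset.Icc 1 N, ∀ j : Fin d, Integrable
      (fun z : PathD N d × PathD N d => G n z.1 j * incr (z.2 - z.1) n j) π := fun n hn j =>
    ((apply_memLp j (hGq n)).comp_measurePreserving hmp).integrable_mul
      (memLp_incr hpq.pos hcost hn j)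
  have hswap : ∀ n ∈ Finset.Icc 1 N, ∀ j : Fin d,
      ∫ z, Dn f n z.1 j * incr (z.2 - z.1) n j ∂π =
        ∫ z, G n z.1 j * incr (z.2 - z.1) n j ∂π := fun n hn j => by
    rw [hπ.integral_mul_incr_eq hpq hcost (g := fun x => Dn f n x j)
      ((continuous_apply j).comp (continuous_Dn hf n)).measurable (apply_memLp j (hD n)) hn j]
    refine integral_congr_ae ?_
    filter_upwards [hmp.quasiMeasurePreserving.ae_eq_comp (hGj n j)] with z hz
    rw [show G n z.1 j = _ from hz]
    rfl
  simp only [fderiv_eq_sum_Dn_mul_incr]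
  refine ⟨integrable_finsetSum _ fun n hn => integrable_finsetSum _ fun j _ => hDW n hn j, ?_⟩
  have hGint : ∀ n, Integrable (fun x => ∑ j, |G n x j| ^ q) μ := fun n =>
    integrable_finsetSum _ fun j _ => (apply_memLp j (hGq n)).integrable_norm_rpow_ofReal
      hpq.symm.pos
  set A : PathD N d × PathD N d → ℝ := fun z => ∑ n ∈ Finset.Icc 1 N, ∑ j, |G n z.1 j| ^ q with hA
  have hA0 : ∀ z, 0 ≤ A z := fun z => Finset.sum_nonneg fun _ _ => Finset.sum_nonneg fun _ _ =>
    Real.rpow_nonneg (abs_nonneg _) _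
  have hGz : ∀ n, Integrable (fun z : PathD N d × PathD N d => ∑ j, |G n z.1 j| ^ q) π := fun n =>
    hmp.integrable_comp_of_integrable (hGint n)
  have hAi : Integrable A π := integrable_finsetSum _ fun n _ => hGz n
  have hAeq : (∫ z, A z ∂π) ^ (1 / q) = optionalNorm q μ f := by
    rw [optionalNorm, hA, integral_finsetSum _ fun n _ => hGz n]
    congr 1
    refine Finset.sum_congr rfl fun n _ => ?_
    simp only [lpnorm_rpow hpq.symm.pos]
    rw [← hmp.map_eq, integral_map measurable_fst.aemeasurable, hmp.map_eq]
    rw [hmp.map_eq]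
    exact (hGint n).aestronglyMeasurable
  have hAL := memLp_rpow_one_div hpq.symm.pos hAi hA0
  have hBL := memLp_rpow_one_div hpq.pos hcost fun z => cN_nonneg p z.1 z.2
  calc ∫ z, ∑ n ∈ Finset.Icc 1 N, ∑ j, Dn f n z.1 j * incr (z.2 - z.1) n j ∂π
      = ∑ n ∈ Finset.Icc 1 N, ∑ j, ∫ z, Dn f n z.1 j * incr (z.2 - z.1) n j ∂π := by
        rw [integral_finsetSum _ fun n hn => integrable_finsetSum _ fun j _ => hDW n hn j]
        exact Finset.sum_congr rfl fun n hn => integral_finsetSum _ fun j _ => hDW n hn j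
    _ = ∑ n ∈ Finset.Icc 1 N, ∑ j, ∫ z, G n z.1 j * incr (z.2 - z.1) n j ∂π :=
        Finset.sum_congr rfl fun n hn => Finset.sum_congr rfl fun j _ => hswap n hn j
    _ = ∫ z, ∑ n ∈ Finset.Icc 1 N, ∑ j, G n z.1 j * incr (z.2 - z.1) n j ∂π := by
        rw [integral_finsetSum _ fun n hn => integrable_finsetSum _ fun j _ => hGW n hn j]
        exact Finset.sum_congr rfl fun n hn =>
          (integral_finsetSum _ fun j _ => hGW n hn j).symm
    _ ≤ ∫ z, A z ^ (1 / q) * cN p z.1 z.2 ^ (1 / p) ∂π := by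
        refine integral_mono (integrable_finsetSum _ fun n hn =>
          integrable_finsetSum _ fun j _ => hGW n hn j) (hAL.integrable_mul hBL) fun z => ?_
        have := Real.inner_le_Lp_mul_Lq (Finset.Icc 1 N ×ˢ Finset.univ)
          (fun i : ℕ × Fin d => G i.1 z.1 i.2) (fun i => incr (z.2 - z.1) i.1 i.2) hpq.symm
        simpa only [Finset.sum_product, cN_eq_sum_incr hpq.pos] using this
    _ ≤ (∫ z, (A z ^ (1 / q)) ^ q ∂π) ^ (1 / q) *
          (∫ z, (cN p z.1 z.2 ^ (1 / p)) ^ p ∂π) ^ (1 / p) :=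
        integral_mul_le_Lp_mul_Lq_of_nonneg hpq.symm
          (Eventually.of_forall fun z => Real.rpow_nonneg (hA0 z) _)
          (Eventually.of_forall fun z => Real.rpow_nonneg (cN_nonneg p z.1 z.2) _) hAL hBL
    _ = optionalNorm q μ f * costD p π ^ (1 / p) := by
        have e1 : ∀ z, (A z ^ (1 / q)) ^ q = A z := fun z => by
          rw [← Real.rpow_mul (hA0 z), one_div_mul_cancel hpq.symm.ne_zero, Real.rpow_one]
        have e2 : ∀ z : PathD N d × PathD N d, (cN p z.1 z.2 ^ (1 / p)) ^ p = cN p z.1 z.2 :=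
          fun z => by
            rw [← Real.rpow_mul (cN_nonneg p _ _), one_div_mul_cancel hpq.ne_zero, Real.rpow_one]
        simp only [e1, e2, hAeq, costD]

theorem memLp_norm_rpow_sub_one {E : Type*} [NormedAddCommGroup E] [MeasurableSpace E]
    [OpensMeasurableSpace E] {μ : Measure E} {p q : ℝ} (hpq : p.HolderConjugate q)
    (hmom : Integrable (fun x : E => ‖x‖ ^ p) μ) :
    MemLp (fun x : E => ‖x‖ ^ (p - 1)) (ENNReal.ofReal q) μ := by
  refine memLp_of_integrable_norm_rpow hpq.symm.pos
    (measurable_norm.pow_const _).aestronglyMeasurable ?_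
  refine hmom.congr (Eventually.of_forall fun x => ?_)
  change ‖x‖ ^ p = ‖‖x‖ ^ (p - 1)‖ ^ q
  rw [Real.norm_eq_abs, abs_of_nonneg (by positivity), ← Real.rpow_mul (norm_nonneg _),
    hpq.sub_one_mul_conj]

theorem memLp_const_mul_one_add_norm_rpow {E : Type*} [NormedAddCommGroup E] [MeasurableSpace E]
    [OpensMeasurableSpace E] {μ : Measure E} [IsProbabilityMeasure μ] {p q : ℝ}
    (hpq : p.HolderConjugate q) (hmom : Integrable (fun x : E => ‖x‖ ^ p) μ) (K : ℝ) :
    MemLp (fun x : E => K * (1 + ‖x‖ ^ (p - 1))) (ENNReal.ofReal q) μ := by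
  have h : MemLp (fun x : E => 1 + ‖x‖ ^ (p - 1)) (ENNReal.ofReal q) μ :=
    (memLp_const (1 : ℝ)).add (memLp_norm_rpow_sub_one hpq hmom)
  exact h.const_mul K

/-- A constant tending to zero as `m → ∞` plus the part of `K (1 + ‖x‖ ^ s)` outside of the ball of
radius `m`. -/
noncomputable def growthTail {E : Type*} [NormedAddCommGroup E] (K s : ℝ) (m : ℕ) (x : E) : ℝ :=
  1 / ((m : ℝ) + 1) + if (m : ℝ) < ‖x‖ then K * (1 + ‖x‖ ^ s) else 0

theorem growthTail_nonneg {E : Type*} [NormedAddCommGroup E] {K : ℝ} (hK : 0 ≤ K) (s : ℝ) (m : ℕ)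
    (x : E) : 0 ≤ growthTail K s m x := by
  unfold growthTail; split_ifs <;> positivity

theorem measurable_growthTail {E : Type*} [NormedAddCommGroup E] [MeasurableSpace E]
    [OpensMeasurableSpace E] (K s : ℝ) (m : ℕ) : Measurable (growthTail K s m : E → ℝ) :=
  measurable_const.add (Measurable.ite (measurableSet_lt measurable_const measurable_norm)
    (measurable_const.mul (measurable_const.add (measurable_norm.pow_const _))) measurable_const)

theorem memLp_growthTail_and_tendsto {E : Type*} [NormedAddCommGroup E] [MeasurableSpace E]
    [OpensMeasurableSpace E] {μ : Measure E} [IsProbabilityMeasure μ] {p q : ℝ}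
    (hpq : p.HolderConjugate q) (hmom : Integrable (fun x : E => ‖x‖ ^ p) μ) {K : ℝ}
    (hK : 0 ≤ K) :
    (∀ m, MemLp (growthTail K (p - 1) m : E → ℝ) (ENNReal.ofReal q) μ) ∧
      Tendsto (fun m => ∫ x, growthTail K (p - 1) m x ^ q ∂μ) atTop (nhds 0) := by
  have hq0 : 0 < q := hpq.symm.pos
  have hdom : MemLp (fun x : E => 1 + K * (1 + ‖x‖ ^ (p - 1))) (ENNReal.ofReal q) μ :=
    (memLp_const (1 : ℝ)).add (memLp_const_mul_one_add_norm_rpow hpq hmom K)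
  have hUle : ∀ m (x : E), growthTail K (p - 1) m x ≤ 1 + K * (1 + ‖x‖ ^ (p - 1)) := fun m x => by
    have h1 : 1 / ((m : ℝ) + 1) ≤ 1 := by
      rw [div_le_one (by positivity)]; linarith [Nat.cast_nonneg (α := ℝ) m]
    have h2 : 0 ≤ K * (1 + ‖x‖ ^ (p - 1)) := by positivity
    unfold growthTail; split_ifs <;> linarith
  have hUL : ∀ m, MemLp (growthTail K (p - 1) m) (ENNReal.ofReal q) μ := fun m =>
    hdom.mono (measurable_growthTail K (p - 1) m).aestronglyMeasurable <|
      Eventually.of_forall fun x => by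
      rw [Real.norm_eq_abs, Real.norm_eq_abs, abs_of_nonneg (growthTail_nonneg hK _ m x)]
      exact (hUle m x).trans (le_abs_self _)
  have hlim : Tendsto (fun m => ∫ x, growthTail K (p - 1) m x ^ q ∂μ) atTop
      (nhds (∫ _ : E, (0 : ℝ) ∂μ)) := by
    refine tendsto_integral_of_dominated_convergence _
      (fun m => ((measurable_growthTail K (p - 1) m).pow_const q).aestronglyMeasurable)
      (hdom.integrable_norm_rpow_ofReal hq0)
      (fun m => Eventually.of_forall fun x => ?_) (Eventually.of_forall fun x => ?_)
    · rw [Real.norm_eq_abs, abs_of_nonneg (Real.rpow_nonneg (growthTail_nonneg hK _ m x) _)]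
      exact Real.rpow_le_rpow (growthTail_nonneg hK _ m x) ((hUle m x).trans (le_abs_self _)) hq0.le
    · have h1 : Tendsto (fun m => growthTail K (p - 1) m x) atTop (nhds 0) := by
        refine tendsto_one_div_add_atTop_nhds_zero_nat.congr' ?_
        filter_upwards [eventually_ge_atTop ⌈‖x‖⌉₊] with m hm
        have : ¬ (m : ℝ) < ‖x‖ := not_lt.2 ((Nat.le_ceil _).trans (Nat.cast_le.2 hm))
        simp [growthTail, this]
      simpa [hq0.ne'] using h1.rpow_const (Or.inr hq0.le)
  exact ⟨hUL, by simpa using hlim⟩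

/-- The Taylor remainder is negligible compared to the `p`-th root of the cost, uniformly over
couplings with first marginal `μ`. -/
theorem exists_integral_taylor_remainder_le {N d : ℕ} {p q : ℝ} (hpq : p.HolderConjugate q)
    {μ : Measure (PathD N d)} [IsProbabilityMeasure μ]
    (hmom : Integrable (fun x : PathD N d => ‖x‖ ^ p) μ)
    {f : PathD N d → ℝ} (hf : ContDiff ℝ 1 f) {K : ℝ}
    (hK : ∀ x, ‖fderiv ℝ f x‖ ≤ K * (1 + ‖x‖ ^ (p - 1))) {ε : ℝ} (hε : 0 < ε) :
    ∃ K₂, ∀ π : Measure (PathD N d × PathD N d), π.map Prod.fst = μ →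
      Integrable (fun z => cN p z.1 z.2) π →
      Integrable (fun z => f z.2 - f z.1 - fderiv ℝ f z.1 (z.2 - z.1)) π ∧
      ∫ z, (f z.2 - f z.1 - fderiv ℝ f z.1 (z.2 - z.1)) ∂π ≤
        ε * costD p π ^ (1 / p) + K₂ * costD p π := by
  have hs : 0 < p - 1 := hpq.sub_one_pos
  have hq0 : 0 < q := hpq.symm.pos
  obtain ⟨K₁, hK₁, hT⟩ := exists_taylor_remainder_le hf hs hK
  obtain ⟨hUL, hlim⟩ := memLp_growthTail_and_tendsto hpq hmom hK₁
  have hU0 : ∀ m (x : PathD N d), 0 ≤ growthTail K₁ (p - 1) m x := growthTail_nonneg hK₁ (p - 1)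
  have hlim' : Tendsto (fun m => (∫ x, growthTail K₁ (p - 1) m x ^ q ∂μ) ^ (1 / q) * N) atTop
      (nhds 0) := by
    have := (hlim.rpow_const (p := 1 / q) (Or.inr (by positivity))).mul_const (N : ℝ)
    simpa [hq0.ne'] using this
  obtain ⟨m, hm⟩ := (hlim'.eventually_lt_const hε).exists
  obtain ⟨K₂, hK₂, hR⟩ := hT m (1 / ((m : ℝ) + 1)) (by positivity)
  refine ⟨K₂ * (N : ℝ) ^ p, fun π hπ hcost => ?_⟩
  have hmp : MeasurePreserving Prod.fst π μ := ⟨measurable_fst, hπ⟩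
  have := hpq.ennrealOfReal
  have hhp := integrable_norm_sub_rpow hpq.pos hcost
  have hhL : MemLp (fun z : PathD N d × PathD N d => ‖z.2 - z.1‖) (ENNReal.ofReal p) π :=
    memLp_of_integrable_norm_rpow hpq.pos measurable_sub_path.norm.aestronglyMeasurable
      (by simpa using hhp)
  have hUz : MemLp (fun z : PathD N d × PathD N d => growthTail K₁ (p - 1) m z.1)
      (ENNReal.ofReal q) π :=
    (hUL m).comp_measurePreserving hmp
  have hUh : Integrable (fun z : PathD N d × PathD N d =>
      growthTail K₁ (p - 1) m z.1 * ‖z.2 - z.1‖) π :=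
    hUz.integrable_mul hhL
  have hbound : ∀ z : PathD N d × PathD N d,
      |f z.2 - f z.1 - fderiv ℝ f z.1 (z.2 - z.1)| ≤
        growthTail K₁ (p - 1) m z.1 * ‖z.2 - z.1‖ + K₂ * ‖z.2 - z.1‖ ^ p := fun z => by
    refine (hR z.1 z.2).trans_eq ?_
    have : ‖z.2 - z.1‖ ^ p = ‖z.2 - z.1‖ ^ (p - 1) * ‖z.2 - z.1‖ := by
      rw [← Real.rpow_add_one' (norm_nonneg _) (by linarith), sub_add_cancel]
    rw [this, growthTail]; ring
  have hbi := hUh.add (hhp.const_mul K₂)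
  have hcont : Continuous (fun z : PathD N d × PathD N d =>
      f z.2 - f z.1 - fderiv ℝ f z.1 (z.2 - z.1)) :=
    ((hf.continuous.comp continuous_snd).sub (hf.continuous.comp continuous_fst)).sub
      (((hf.continuous_fderiv one_ne_zero).comp continuous_fst).clm_apply
        (continuous_snd.sub continuous_fst))
  have hRi : Integrable (fun z => f z.2 - f z.1 - fderiv ℝ f z.1 (z.2 - z.1)) π :=
    hbi.mono' hcont.measurable.aestronglyMeasurable (Eventually.of_forall hbound)
  refine ⟨hRi, ?_⟩
  have hcost0 : 0 ≤ costD p π := integral_nonneg fun z => cN_nonneg p z.1 z.2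
  have hhcost : ∫ z, ‖z.2 - z.1‖ ^ p ∂π ≤ (N : ℝ) ^ p * costD p π := by
    rw [costD, ← integral_const_mul]
    exact integral_mono hhp (hcost.const_mul _) fun z => norm_sub_rpow_le_cN hpq.pos z.1 z.2
  have hUint : ∫ z, growthTail K₁ (p - 1) m z.1 ^ q ∂π =
      ∫ x, growthTail K₁ (p - 1) m x ^ q ∂μ := by
    rw [← hπ, integral_map measurable_fst.aemeasurable
      ((measurable_growthTail K₁ (p - 1) m).pow_const q).aestronglyMeasurable]
  calc ∫ z, (f z.2 - f z.1 - fderiv ℝ f z.1 (z.2 - z.1)) ∂π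
      ≤ ∫ z, (growthTail K₁ (p - 1) m z.1 * ‖z.2 - z.1‖ + K₂ * ‖z.2 - z.1‖ ^ p) ∂π :=
        integral_mono hRi hbi fun z => (le_abs_self _).trans (hbound z)
    _ = ∫ z, growthTail K₁ (p - 1) m z.1 * ‖z.2 - z.1‖ ∂π + K₂ * ∫ z, ‖z.2 - z.1‖ ^ p ∂π := by
        rw [integral_add hUh (hhp.const_mul K₂), integral_const_mul]
    _ ≤ (∫ z, growthTail K₁ (p - 1) m z.1 ^ q ∂π) ^ (1 / q) *
          (∫ z, ‖z.2 - z.1‖ ^ p ∂π) ^ (1 / p) +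
          K₂ * ((N : ℝ) ^ p * costD p π) := by
        gcongr
        exact integral_mul_le_Lp_mul_Lq_of_nonneg hpq.symm
          (Eventually.of_forall fun z => hU0 m z.1)
          (Eventually.of_forall fun z => norm_nonneg _) hUz hhL
    _ ≤ (∫ x, growthTail K₁ (p - 1) m x ^ q ∂μ) ^ (1 / q) * ((N : ℝ) ^ p * costD p π) ^ (1 / p) +
          K₂ * ((N : ℝ) ^ p * costD p π) := by
        rw [hUint]
        have h1 : 0 ≤ ∫ x, growthTail K₁ (p - 1) m x ^ q ∂μ :=
          integral_nonneg fun x => Real.rpow_nonneg (hU0 m x) _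
        have h2 : 0 ≤ ∫ z : PathD N d × PathD N d, ‖z.2 - z.1‖ ^ p ∂π :=
          integral_nonneg fun z => by positivity
        have h3 := hpq.pos
        gcongr
    _ = (∫ x, growthTail K₁ (p - 1) m x ^ q ∂μ) ^ (1 / q) * N * costD p π ^ (1 / p) +
          K₂ * (N : ℝ) ^ p * costD p π := by
        rw [Real.mul_rpow (by positivity) hcost0, ← Real.rpow_mul (Nat.cast_nonneg _),
          mul_one_div_cancel hpq.ne_zero, Real.rpow_one]
        ring
    _ ≤ ε * costD p π ^ (1 / p) + K₂ * (N : ℝ) ^ p * costD p π := by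
        gcongr

/-- First-order upper bound along causal couplings with vanishing cost:
for any sequence `(π_k) ⊆ Π_c(μ,*)` with `E_{π_k}[c_N(X,Y)] > 0` and `E_{π_k}[c_N(X,Y)] → 0`,
`limsup_k E_{π_k}[f(Y) − f(X)] / E_{π_k}[c_N(X,Y)]^{1/p} ≤ ‖ᵒ𝔻f‖_{L^q(μ)}`. -/
theorem statement_9 {N d : ℕ} (p q : ℝ) (hp : 1 < p) (hq : q = p / (p - 1))
    (μ : Measure (PathD N d)) [IsProbabilityMeasure μ]
    (hmom : Integrable (fun x : PathD N d => ‖x‖ ^ p) μ)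
    (f : PathD N d → ℝ) (hf : ContDiff ℝ 1 f)
    (C : ℝ) (hgrow : ∀ n : ℕ, ∀ x : PathD N d,
      lpnorm q (Dn f n x) ≤ C * (1 + ‖x‖ ^ (p - 1)))
    (πs : ℕ → Measure (PathD N d × PathD N d))
    (hprob : ∀ k, IsProbabilityMeasure (πs k))
    (hcausal : ∀ k, IsCausalStar μ (πs k))
    (hcost : ∀ k, Integrable (fun z => cN p z.1 z.2) (πs k))
    (hpos : ∀ k, 0 < costD p (πs k))
    (hto0 : Tendsto (fun k => costD p (πs k)) atTop (nhds 0)) :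
    Filter.limsup (fun k =>
        (((∫ z, (f z.2 - f z.1) ∂(πs k)) / (costD p (πs k)) ^ (1 / p) : ℝ) : EReal))
      atTop ≤ ((optionalNorm q μ f : ℝ) : EReal) := by
  have hpq : p.HolderConjugate q := by rw [hq]; exact Real.HolderConjugate.conjExponent hp
  have hq0 : 0 < q := hpq.symm.pos
  have hD : ∀ n, MemLp (Dn f n) (ENNReal.ofReal q) μ := fun n => by
    refine (memLp_const_mul_one_add_norm_rpow hpq hmom C).mono
      (continuous_Dn hf n).aestronglyMeasurable (Eventually.of_forall fun x => ?_)
    refine ((pi_norm_le_iff_of_nonneg (lpnorm_nonneg q _)).2 fun j =>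
      abs_apply_le_lpnorm hq0 _ j).trans ((hgrow n x).trans (le_abs_self _))
  have hK : ∀ x, ‖fderiv ℝ f x‖ ≤ N * d * 2 * C * (1 + ‖x‖ ^ (p - 1)) := fun x =>
    (norm_fderiv_le_of_lpnorm_Dn_le hq0 fun n => hgrow n x).trans_eq (by ring)
  refine EReal.le_of_forall_lt_iff_le.1 fun a ha => ?_
  rw [EReal.coe_lt_coe_iff] at ha
  obtain ⟨K₂, hK₂⟩ := exists_integral_taylor_remainder_le hpq hmom hf hK
    (half_pos (sub_pos.2 ha))
  have hlim : Tendsto (fun k => K₂ * costD p (πs k) ^ (1 / q)) atTop (nhds 0) := by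
    have := (hto0.rpow_const (p := 1 / q) (Or.inr (by positivity))).const_mul K₂
    simpa [hq0.ne'] using this
  refine limsup_le_of_le (by isBoundedDefault) ?_
  filter_upwards [hlim.eventually_lt_const (half_pos (sub_pos.2 ha))] with k hk
  have := hprob k
  rw [EReal.coe_le_coe_iff, div_le_iff₀ (Real.rpow_pos_of_pos (hpos k) _)]
  obtain ⟨hLi, hL⟩ := (hcausal k).integral_fderiv_le hpq (hcost k) hf hD
  obtain ⟨hRi, hR⟩ := hK₂ (πs k) (hcausal k).1 (hcost k)
  have hsplit : ∫ z, (f z.2 - f z.1) ∂(πs k) =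
      ∫ z, (f z.2 - f z.1 - fderiv ℝ f z.1 (z.2 - z.1)) ∂(πs k) +
        ∫ z, fderiv ℝ f z.1 (z.2 - z.1) ∂(πs k) := by
    rw [← integral_add hRi hLi]; simp
  have hcost_eq : costD p (πs k) = costD p (πs k) ^ (1 / q) * costD p (πs k) ^ (1 / p) := by
    rw [← Real.rpow_add (hpos k), one_div, one_div, hpq.symm.inv_add_inv_eq_one, Real.rpow_one]
  have hk' : K₂ * costD p (πs k) ≤ (a - optionalNorm q μ f) / 2 * costD p (πs k) ^ (1 / p) := by
    have h0 := Real.rpow_nonneg (hpos k).le (1 / p)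
    calc K₂ * costD p (πs k)
        = K₂ * costD p (πs k) ^ (1 / q) * costD p (πs k) ^ (1 / p) := by
          rw [mul_assoc, ← hcost_eq]
      _ ≤ _ := mul_le_mul_of_nonneg_right hk.le h0
  rw [hsplit]
  linarith
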